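/- Let R ∈ S²_B(⋀²ℝ⁴) be an Einstein algebraic curvature operator with s(R) = 1 satisfying Q(R) = ‖Ric(R)‖² R (equivalently Q(R) = (1/4)R). Then R preserves the orthogonal splitting ⋀²ℝ⁴ = ⋀⁺ ⊕ ⋀⁻ into the ±1 eigenspaces of the Hodge star, and the pair of eigenvalue multisets of R|_{⋀⁺} and R|_{⋀⁻} is, up to interchanging ⋀⁺ and ⋀⁻, one of: ({1/12,1/12,1/12}, {1/12,1/12,1/12}) (the normalized round S⁴), ({0,0,1/4}, {0,0,1/4}) (the normalized product S²×S²), or ({0,0,1/4}, {1/12,1/12,1/12}) (the normalized Fubini–Study ℂP²). In particular, up to the action of O(4), R is the curvature operator of a symmetric space with unit scalar curvature. -/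

import Mathlib

open scoped BigOperators
open Matrix Filter

noncomputable section

/-- `so n`: the Lie algebra of real skew-symmetric `n × n` matrices, as a submodule of
matrices.  It is the model for `⋀²ℝⁿ` under the identification `x ∧ y ↦ x yᵀ - y xᵀ`,
i.e. `(x ∧ y)(z) = ⟨y,z⟩x - ⟨x,z⟩y`. -/
def so (n : ℕ) : Submodule ℝ (Matrix (Fin n) (Fin n) ℝ) where
  carrier := {A | Aᵀ = -A}
  add_mem' := fun {a b} ha hb => by
    simp only [Set.mem_setOf_eq] at *
    rw [Matrix.transpose_add, ha, hb, neg_add]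
  zero_mem' := by simp
  smul_mem' := fun c {a} ha => by
    simp only [Set.mem_setOf_eq] at *
    rw [Matrix.transpose_smul, ha, smul_neg]

lemma mem_so {n : ℕ} {A : Matrix (Fin n) (Fin n) ℝ} : A ∈ so n ↔ Aᵀ = -A := Iff.rfl

lemma so_skew {n : ℕ} (X : so n) : (X.1)ᵀ = -X.1 := mem_so.mp X.2

lemma so_skew' {n : ℕ} (X : so n) (i j : Fin n) : X.1 j i = -X.1 i j := by
  have h := congrFun (congrFun (so_skew X) i) j
  simpa [Matrix.transpose_apply] using h

/-- The Lie bracket (matrix commutator) on `so n`. -/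
def brkt {n : ℕ} (X Y : so n) : so n :=
  ⟨X.1 * Y.1 - Y.1 * X.1, by
    rw [mem_so, Matrix.transpose_sub, Matrix.transpose_mul, Matrix.transpose_mul,
      so_skew X, so_skew Y]
    simp [neg_sub]⟩

/-- The inner product `⟨A, B⟩ = -(1/2) tr (A B)` on `so n ≅ ⋀²ℝⁿ`, for which
`{e_i ∧ e_j : i < j}` is orthonormal. -/
def ip {n : ℕ} (X Y : so n) : ℝ := -(1 / 2) * (X.1 * Y.1).trace

/-- `ip X` as a linear functional. -/
def ipL {n : ℕ} (X : so n) : so n →ₗ[ℝ] ℝ where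
  toFun Y := ip X Y
  map_add' Y Z := by
    simp [ip, Matrix.mul_add, Matrix.trace_add]
    ring
  map_smul' c Y := by
    simp [ip, Matrix.mul_smul, Matrix.trace_smul]
    ring

/-- The wedge `x ∧ y` of two vectors, as an element of `so n`. -/
def wedgeVec {n : ℕ} (x y : Fin n → ℝ) : so n :=
  ⟨Matrix.of fun i j => x i * y j - y i * x j, by
    rw [mem_so]
    ext i j
    simp [Matrix.transpose_apply]
    ring⟩

/-- Index set for the standard orthonormal basis `{e_i ∧ e_j : i < j}` of `so n`. -/
def pairs (n : ℕ) : Finset (Fin n × Fin n) := Finset.univ.filter (fun p => p.1 < p.2)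

/-- Standard basis vector of `ℝⁿ`. -/
def stdVec {n : ℕ} (i : Fin n) : Fin n → ℝ := Pi.single i 1

/-- The standard orthonormal basis element `e_i ∧ e_j` of `so n`. -/
def omegaB {n : ℕ} (p : Fin n × Fin n) : so n := wedgeVec (stdVec p.1) (stdVec p.2)

/-- Hamilton's sharp product `A # B` of self-adjoint endomorphisms of `⋀²ℝⁿ ≅ so n`:
`⟨(A # B)(φ), ψ⟩ = (1/2) Σ_{α,β} ⟨[A ω_α, B ω_β], φ⟩ ⟨[ω_α, ω_β], ψ⟩`
over the orthonormal basis `{ω_α} = {e_i ∧ e_j : i < j}`. -/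
def sharp {n : ℕ} (A B : Module.End ℝ (so n)) : Module.End ℝ (so n) :=
  (1 / 2 : ℝ) • ∑ p ∈ pairs n, ∑ q ∈ pairs n,
    (ipL (brkt (A (omegaB p)) (B (omegaB q)))).smulRight (brkt (omegaB p) (omegaB q))

/-- The bilinear map `Q(A,B) = (1/2)(AB + BA) + A # B`. -/
def Qbil {n : ℕ} (A B : Module.End ℝ (so n)) : Module.End ℝ (so n) :=
  (1 / 2 : ℝ) • (A * B + B * A) + sharp A B

/-- `Q(R) = R² + R # R`. -/
def Qop {n : ℕ} (R : Module.End ℝ (so n)) : Module.End ℝ (so n) := R * R + sharp R R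

/-- Self-adjointness of an endomorphism of `so n ≅ ⋀²ℝⁿ`. -/
def IsSelfAdjointCO {n : ℕ} (R : Module.End ℝ (so n)) : Prop :=
  ∀ X Y : so n, ip (R X) Y = ip X (R Y)

/-- The first Bianchi identity. -/
def SatBianchi {n : ℕ} (R : Module.End ℝ (so n)) : Prop :=
  ∀ x y z w : Fin n → ℝ,
    ip (R (wedgeVec x y)) (wedgeVec z w) + ip (R (wedgeVec y z)) (wedgeVec x w)
      + ip (R (wedgeVec z x)) (wedgeVec y w) = 0

/-- Algebraic curvature operators: self-adjoint endomorphisms of `⋀²ℝⁿ` satisfying the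
first Bianchi identity.  `IsACO R` says `R ∈ S²_B(⋀²ℝⁿ)`. -/
def IsACO {n : ℕ} (R : Module.End ℝ (so n)) : Prop := IsSelfAdjointCO R ∧ SatBianchi R

/-- The Ricci tensor of `R`, `Ric(R)_{ij} = Σ_k ⟨R(e_i ∧ e_k), e_j ∧ e_k⟩`. -/
def RicM {n : ℕ} (R : Module.End ℝ (so n)) : Matrix (Fin n) (Fin n) ℝ :=
  Matrix.of fun i j => ∑ k, ip (R (wedgeVec (stdVec i) (stdVec k))) (wedgeVec (stdVec j) (stdVec k))

/-- The scalar curvature `s(R) = tr Ric(R)`. -/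
def scal {n : ℕ} (R : Module.End ℝ (so n)) : ℝ := (RicM R).trace

/-- `‖Ric(R)‖² = tr (Ric(R)²)`. -/
def ricNormSq {n : ℕ} (R : Module.End ℝ (so n)) : ℝ := (RicM R * RicM R).trace

/-- The traceless Ricci tensor `Ric₀(R)`. -/
def Ric0M {n : ℕ} (R : Module.End ℝ (so n)) : Matrix (Fin n) (Fin n) ℝ :=
  RicM R - (scal R / n) • (1 : Matrix (Fin n) (Fin n) ℝ)

/-- `R` is Einstein if `Ric(R)` is a scalar multiple of the identity of `ℝⁿ`. -/
def IsEinstein {n : ℕ} (R : Module.End ℝ (so n)) : Prop :=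
  ∃ c : ℝ, RicM R = c • (1 : Matrix (Fin n) (Fin n) ℝ)

lemma wedgeEnd_key {n : ℕ} (A B : Matrix (Fin n) (Fin n) ℝ) (M : so n) :
    (A * M.1 * Bᵀ + B * M.1 * Aᵀ)ᵀ = -(A * M.1 * Bᵀ + B * M.1 * Aᵀ) := by
  have hM := so_skew M
  rw [Matrix.transpose_add, Matrix.transpose_mul, Matrix.transpose_mul,
    Matrix.transpose_mul, Matrix.transpose_mul, Matrix.transpose_transpose,
    Matrix.transpose_transpose, hM]
  simp only [Matrix.mul_neg, Matrix.neg_mul, Matrix.mul_assoc, neg_add]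
  abel

/-- The wedge `A ∧ B` of two endomorphisms of `ℝⁿ`, as an endomorphism of `⋀²ℝⁿ ≅ so n`:
`(A ∧ B)(v ∧ w) = (1/2)(Av ∧ Bw + Bv ∧ Aw)`, i.e. `M ↦ (1/2)(A M Bᵀ + B M Aᵀ)`. -/
def wedgeEnd {n : ℕ} (A B : Matrix (Fin n) (Fin n) ℝ) : Module.End ℝ (so n) where
  toFun M := ⟨(1 / 2 : ℝ) • (A * M.1 * Bᵀ + B * M.1 * Aᵀ), by
    rw [mem_so, Matrix.transpose_smul, wedgeEnd_key, smul_neg]⟩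
  map_add' M N := by
    apply Subtype.ext
    simp [Matrix.mul_add, Matrix.add_mul, smul_add]
    abel
  map_smul' c M := by
    apply Subtype.ext
    simp [Matrix.mul_smul, Matrix.smul_mul, smul_smul, mul_comm]

/-- Inner product `⟨A, B⟩ = tr(A ∘ B)` on endomorphisms of `⋀²ℝⁿ` (the Frobenius inner
product for self-adjoint operators). -/
def endIP {n : ℕ} (A B : Module.End ℝ (so n)) : ℝ := LinearMap.trace ℝ ↥(so n) (A * B)

/-- Norm of an endomorphism of `⋀²ℝⁿ` induced by `endIP`. -/
def endNorm {n : ℕ} (A : Module.End ℝ (so n)) : ℝ := Real.sqrt (endIP A A)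

/-- Huisken's trilinear form `tri(A,B,C) = tr((AB + BA + 2 A#B) ∘ C) = 2⟨Q(A,B), C⟩`. -/
def tri {n : ℕ} (A B C : Module.End ℝ (so n)) : ℝ :=
  LinearMap.trace ℝ ↥(so n) ((A * B + B * A + (2 : ℝ) • sharp A B) * C)

/-- The identity component `R_I = (s(R)/(n(n-1))) id ∧ id` of a curvature operator. -/
def compI {n : ℕ} (R : Module.End ℝ (so n)) : Module.End ℝ (so n) :=
  (scal R / ((n : ℝ) * ((n : ℝ) - 1))) • 1

/-- The traceless-Ricci component `R_{Ric₀} = (2/(n-2)) Ric₀(R) ∧ id`. -/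
def compRic0 {n : ℕ} (R : Module.End ℝ (so n)) : Module.End ℝ (so n) :=
  (2 / ((n : ℝ) - 2)) • wedgeEnd (Ric0M R) 1

/-- The Weyl component `R_W = R - R_I - R_{Ric₀}`. -/
def compW {n : ℕ} (R : Module.End ℝ (so n)) : Module.End ℝ (so n) := R - compI R - compRic0 R

/-- The derivative `DQ̃(R)` of the normalized vector field
`Q̃(R) = Q(R) - ‖Ric R‖² R` at `R`, applied to `A`:
`DQ̃(R)(A) = 2Q(R,A) - ‖Ric R‖² A - 2 tr(Ric R · Ric A) R`. -/
def DQt {n : ℕ} (R A : Module.End ℝ (so n)) : Module.End ℝ (so n) :=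
  (2 : ℝ) • Qbil R A - ricNormSq R • A - (2 * (RicM R * RicM A).trace) • R


/-- The Hodge star operator on `⋀²ℝ⁴ ≅ so 4` (for the standard orientation):
`∗(e_i ∧ e_j) = e_k ∧ e_l` for `(i,j,k,l)` an even permutation of `(0,1,2,3)`. -/
def hodge (M : so 4) : so 4 :=
  ⟨!![0, M.1 2 3, -(M.1 1 3), M.1 1 2;
      -(M.1 2 3), 0, M.1 0 3, -(M.1 0 2);
      M.1 1 3, -(M.1 0 3), 0, M.1 0 1;
      -(M.1 1 2), M.1 0 2, -(M.1 0 1), 0], by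
    rw [mem_so]
    ext i j
    fin_cases i <;> fin_cases j <;>
      simp [Matrix.transpose_apply]⟩

/-!
A unit `ε = ±1` labels the half `⋀^ε` of `⋀²ℝ⁴`, and the basis `dualBasis ε` identifies that half
with `ℝ³` in such a way that the Lie bracket becomes a multiple of the cross product, while the two
halves commute.  The Einstein condition says precisely that a self-adjoint `R` has no component
mapping one half to the other, so `R` is given by two symmetric `3 × 3` blocks `A`.  Since
`Ax × Ay = (adj A)ᵀ (x × y)`, the equation `Q(R) = c R` becomes `A² + 2 adj A = c A` for each block,
and the Bianchi identity gives both blocks the trace `s(R) / 4`, which is `c` here.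
By Cayley–Hamilton `adj A = A² - (tr A) A + (tr adj A)`, so the eigenvalues `x, y, z` of `A` are
roots of a single quadratic `t² - c t = d`.  As `x + y + z = c`, subtracting two of these equations
gives `(x - y) z = 0` and `(y - z) x = 0`, which leaves only `{c/3, c/3, c/3}` and `{0, 0, c}`.
-/

section InnerProduct

variable {n : ℕ}

lemma ipL_apply (X Y : so n) : ipL X Y = ip X Y := rfl

lemma ip_comm (X Y : so n) : ip X Y = ip Y X := by
  rw [ip, ip, Matrix.trace_mul_comm]

lemma ip_add_right (X Y Z : so n) : ip X (Y + Z) = ip X Y + ip X Z := map_add (ipL X) Y Z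

lemma ip_smul_right (c : ℝ) (X Y : so n) : ip X (c • Y) = c * ip X Y := map_smul (ipL X) c Y

lemma ip_neg_right (X Y : so n) : ip X (-Y) = -ip X Y := map_neg (ipL X) Y

lemma ip_add_left (X Y Z : so n) : ip (X + Y) Z = ip X Z + ip Y Z := by
  simp only [ip_comm _ Z, ip_add_right]

lemma ip_smul_left (c : ℝ) (X Y : so n) : ip (c • X) Y = c * ip X Y := by
  simp only [ip_comm _ Y, ip_smul_right]

lemma ip_neg_left (X Y : so n) : ip (-X) Y = -ip X Y := by
  simp only [ip_comm _ Y, ip_neg_right]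

lemma wedgeVec_swap (x y : Fin n → ℝ) : wedgeVec y x = -wedgeVec x y := by
  ext i j
  simp [wedgeVec]

lemma ip_wedgeVec_left (x y : Fin n → ℝ) (M : so n) : ip (wedgeVec x y) M = x ⬝ᵥ M.1 *ᵥ y := by
  have hw : (wedgeVec x y).1 = vecMulVec x y - vecMulVec y x := rfl
  have hM : y ⬝ᵥ M.1 *ᵥ x = -(x ⬝ᵥ M.1 *ᵥ y) := by
    rw [dotProduct_mulVec, ← mulVec_transpose, so_skew, neg_mulVec, neg_dotProduct, dotProduct_comm]
  rw [ip, hw, sub_mul, trace_sub, vecMulVec_mul, vecMulVec_mul, trace_vecMulVec, trace_vecMulVec,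
    dotProduct_comm x, dotProduct_comm y, ← dotProduct_mulVec, ← dotProduct_mulVec, hM]
  ring

lemma ip_omegaB_left (p : Fin n × Fin n) (M : so n) : ip (omegaB p) M = M.1 p.1 p.2 := by
  rw [omegaB, ip_wedgeVec_left, stdVec, stdVec, mulVec_single_one, single_one_dotProduct, col_apply]

end InnerProduct

section Bracket

variable {n : ℕ}

/-- The Lie bracket as a bilinear map. -/
def brktL : so n →ₗ[ℝ] so n →ₗ[ℝ] so n :=
  LinearMap.mk₂ ℝ brkt
    (fun X Y Z => Subtype.ext (by simp only [brkt, Submodule.coe_add, add_mul, mul_add]; abel))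
    (fun c X Y => Subtype.ext (by simp [brkt, smul_sub]))
    (fun X Y Z => Subtype.ext (by simp only [brkt, Submodule.coe_add, add_mul, mul_add]; abel))
    (fun c X Y => Subtype.ext (by simp [brkt, smul_sub]))

lemma brktL_apply (X Y : so n) : brktL X Y = brkt X Y := rfl

lemma sharp_apply (A B : Module.End ℝ (so n)) (X : so n) :
    sharp A B X = (1 / 2 : ℝ) • ∑ p ∈ pairs n, ∑ q ∈ pairs n,
      ip (brkt (A (omegaB p)) (B (omegaB q))) X • brkt (omegaB p) (omegaB q) := by
  simp [sharp, ipL_apply, LinearMap.sum_apply]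

end Bracket

/-- The components `R_{ijkl} = ⟨R(e_i ∧ e_j), e_k ∧ e_l⟩` of `R` in the standard basis. -/
def curv {n : ℕ} (R : Module.End ℝ (so n)) (i j k l : Fin n) : ℝ :=
  ip (R (wedgeVec (stdVec i) (stdVec j))) (wedgeVec (stdVec k) (stdVec l))

section CurvatureComponents

variable {n : ℕ} {R : Module.End ℝ (so n)}

lemma curv_swap_left (i j k l : Fin n) : curv R j i k l = -curv R i j k l := by
  rw [curv, wedgeVec_swap, map_neg, ip_neg_left, curv]

lemma curv_swap_right (i j k l : Fin n) : curv R i j l k = -curv R i j k l := by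
  rw [curv, wedgeVec_swap (stdVec k), ip_neg_right, curv]

lemma curv_self_left (i k l : Fin n) : curv R i i k l = 0 :=
  self_eq_neg.mp (curv_swap_left i i k l)

lemma curv_self_right (i j k : Fin n) : curv R i j k k = 0 :=
  self_eq_neg.mp (curv_swap_right i j k k)

lemma curv_comm (hS : IsSelfAdjointCO R) (i j k l : Fin n) : curv R i j k l = curv R k l i j := by
  rw [curv, hS, ip_comm, curv]

lemma RicM_apply (i j : Fin n) : RicM R i j = ∑ k, curv R i k j k := rfl

lemma ricNormSq_of_isEinstein (hR : IsEinstein R) : ricNormSq R = scal R ^ 2 / n := by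
  obtain ⟨c, hc⟩ := hR
  rcases eq_or_ne n 0 with rfl | hn
  · simp [ricNormSq, Matrix.trace]
  · have hn' : (n : ℝ) ≠ 0 := Nat.cast_ne_zero.mpr hn
    simp only [ricNormSq, scal, hc, smul_mul_assoc, one_mul, smul_smul, trace_smul, trace_one,
      Fintype.card_fin, smul_eq_mul]
    field_simp

end CurvatureComponents

section ThreeByThree

lemma sum_crossProduct_smul {K : Type*} [CommRing K] (A : Matrix (Fin 3) (Fin 3) K)
    (v : Fin 3 → K) :
    ∑ k, ∑ l, ((A.col k ⨯₃ A.col l) ⬝ᵥ v) • (Pi.single k 1 ⨯₃ Pi.single l 1) =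
      (2 : K) • (A.adjugate *ᵥ v) := by
  ext i
  fin_cases i <;>
    simp [Fin.sum_univ_three, cross_apply, adjugate_fin_three, dotProduct] <;> ring

lemma adjugate_fin_three_eq {K : Type*} [CommRing K] (A : Matrix (Fin 3) (Fin 3) K) :
    A.adjugate = A * A - A.trace • A + A.adjugate.trace • (1 : Matrix (Fin 3) (Fin 3) K) := by
  ext i j
  fin_cases i <;> fin_cases j <;>
    simp [adjugate_fin_three, trace_fin_three, Matrix.mul_apply, Fin.sum_univ_three] <;> ring

lemma multiset_eq_of_common_quadratic {K : Type*} [Field K] [CharZero K] {c d x y z : K}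
    (hx : x ^ 2 - c * x = d) (hy : y ^ 2 - c * y = d) (hz : z ^ 2 - c * z = d)
    (hsum : x + y + z = c) :
    ({x, y, z} : Multiset K) = {c / 3, c / 3, c / 3} ∨ ({x, y, z} : Multiset K) = {0, 0, c} := by
  have hxy : (x - y) * z = 0 := by linear_combination hy - hx + (x - y) * hsum
  have hyz : (y - z) * x = 0 := by linear_combination hz - hy + (y - z) * hsum
  rcases mul_eq_zero.mp hxy with hxy | rfl <;> rcases mul_eq_zero.mp hyz with hyz | rfl
  · left
    obtain rfl := sub_eq_zero.mp hxy
    obtain rfl := sub_eq_zero.mp hyz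
    obtain rfl : x = c / 3 := by linear_combination hsum / 3
    rfl
  · right
    obtain rfl : y = 0 := (sub_eq_zero.mp hxy).symm
    obtain rfl : z = c := by simpa using hsum
    rfl
  · right
    obtain rfl : y = 0 := sub_eq_zero.mp hyz
    obtain rfl : x = c := by simpa using hsum
    rw [Multiset.insert_eq_cons, Multiset.insert_eq_cons, Multiset.cons_swap,
      ← Multiset.insert_eq_cons, Multiset.pair_comm]
    rfl
  · right
    obtain rfl : y = c := by simpa using hsum
    rw [Multiset.pair_comm]

lemma eigenvalues_eq_of_quadratic {A : Matrix (Fin 3) (Fin 3) ℝ} (hA : A.IsHermitian)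
    (h : A * A + (2 : ℝ) • A.adjugate = A.trace • A) :
    let l := hA.eigenvalues
    ({l 0, l 1, l 2} : Multiset ℝ) = {A.trace / 3, A.trace / 3, A.trace / 3} ∨
      ({l 0, l 1, l 2} : Multiset ℝ) = {0, 0, A.trace} := by
  intro l
  have hquad : A * A = A.trace • A - (2 / 3 * A.adjugate.trace) • 1 := by
    rw [adjugate_fin_three_eq] at h
    linear_combination (norm := module) (1 / 3 : ℝ) • h
  have hroot (i : Fin 3) : l i ^ 2 - A.trace * l i = -(2 / 3 * A.adjugate.trace) := by
    have hv : hA.eigenvectorBasis i ≠ 0 := hA.eigenvectorBasis.orthonormal.ne_zero i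
    have hv' : (l i * l i) • (hA.eigenvectorBasis i).ofLp =
        (A.trace * l i - 2 / 3 * A.adjugate.trace) • (hA.eigenvectorBasis i).ofLp := by
      have h' := congrArg (· *ᵥ (hA.eigenvectorBasis i).ofLp) hquad
      simpa only [← mulVec_mulVec, hA.mulVec_eigenvectorBasis, mulVec_smul, sub_mulVec,
        smul_mulVec, one_mulVec, smul_smul, ← sub_smul] using h'
    have hl := smul_left_injective ℝ ((WithLp.ofLp_eq_zero 2).ne.mpr hv) hv'
    linear_combination hl
  have hsum : l 0 + l 1 + l 2 = A.trace := by
    simp [hA.trace_eq_sum_eigenvalues, Fin.sum_univ_three, l]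
  exact multiset_eq_of_common_quadratic (hroot 0) (hroot 1) (hroot 2) hsum

end ThreeByThree

section HodgeHalves

lemma so_four_ext {M N : so 4} (h01 : M.1 0 1 = N.1 0 1) (h02 : M.1 0 2 = N.1 0 2)
    (h03 : M.1 0 3 = N.1 0 3) (h12 : M.1 1 2 = N.1 1 2) (h13 : M.1 1 3 = N.1 1 3)
    (h23 : M.1 2 3 = N.1 2 3) : M = N := by
  have hdiag (X : so 4) (i : Fin 4) : X.1 i i = 0 := by linarith [so_skew' X i i]
  have hswap {i j : Fin 4} (h : M.1 i j = N.1 i j) : M.1 j i = N.1 j i := by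
    rw [so_skew' M i j, so_skew' N i j, h]
  ext i j
  fin_cases i <;> fin_cases j <;>
    first | assumption | exact hswap ‹_› | exact (hdiag M _).trans (hdiag N _).symm

/-- An orthogonal basis of the half `⋀^ε` of `⋀²ℝ⁴` on which the Hodge star is the unit `ε = ±1`,
with vectors of squared length `2`. In `Fin 3` the sums `k + 1` and `k + 2` wrap around, so the
second summand runs through `e₂ ∧ e₃`, `e₃ ∧ e₁`, `e₁ ∧ e₂`. -/
def dualBasis (ε : ℤˣ) : Fin 3 → so 4 :=
  fun k => omegaB (0, k.succ) + ε • omegaB ((k + 1).succ, (k + 2).succ)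

/-- The identification of `ℝ³` with the half `⋀^ε` of `⋀²ℝ⁴` given by the basis `dualBasis ε`. -/
def dualEmb (ε : ℤˣ) : (Fin 3 → ℝ) →ₗ[ℝ] so 4 := Fintype.linearCombination ℝ (dualBasis ε)

lemma dualEmb_single (ε : ℤˣ) (k : Fin 3) : dualEmb ε (Pi.single k 1) = dualBasis ε k := by
  rw [dualEmb, Fintype.linearCombination_apply_single, one_smul]

lemma ip_dualBasis_left (ε : ℤˣ) (k : Fin 3) (M : so 4) :
    ip (dualBasis ε k) M = M.1 0 k.succ + ε • M.1 (k + 1).succ (k + 2).succ := by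
  rcases Int.units_eq_one_or ε with rfl | rfl <;>
    simp [dualBasis, ip_add_left, ip_neg_left, ip_omegaB_left]

lemma coe_dualEmb (ε : ℤˣ) (v : Fin 3 → ℝ) :
    (dualEmb ε v).1 = !![0, v 0, v 1, v 2;
                        -v 0, 0, ε • v 2, -(ε • v 1);
                        -v 1, -(ε • v 2), 0, ε • v 0;
                        -v 2, ε • v 1, -(ε • v 0), 0] := by
  rcases Int.units_eq_one_or ε with rfl | rfl <;>
  · ext i j
    fin_cases i <;> fin_cases j <;>
      simp [dualEmb, Fintype.linearCombination_apply, Fin.sum_univ_three, dualBasis, omegaB,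
        wedgeVec, stdVec, Pi.single_apply]

lemma hodge_dualEmb (ε : ℤˣ) (v : Fin 3 → ℝ) : hodge (dualEmb ε v) = ε • dualEmb ε v := by
  rcases Int.units_eq_one_or ε with rfl | rfl <;>
    apply so_four_ext <;> simp [hodge, coe_dualEmb]

lemma eq_sum_dualEmb (M : so 4) :
    M = ∑ ε : ℤˣ, dualEmb ε fun k => ip (dualBasis ε k) M / 2 := by
  apply so_four_ext <;> simp [UnitsInt.univ, coe_dualEmb, ip_dualBasis_left] <;>
    linarith [so_skew' M 1 3]

lemma ip_dualEmb_left (ε : ℤˣ) (v : Fin 3 → ℝ) (M : so 4) :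
    ip (dualEmb ε v) M = v ⬝ᵥ fun k => ip (dualBasis ε k) M := by
  simp only [ip_comm _ M, dualEmb, Fintype.linearCombination_apply, ← ipL_apply M, map_sum,
    map_smul, dotProduct, smul_eq_mul]

lemma ip_dualEmb_dualEmb (ε δ : ℤˣ) (v w : Fin 3 → ℝ) :
    ip (dualEmb ε v) (dualEmb δ w) = if ε = δ then 2 * (v ⬝ᵥ w) else 0 := by
  rw [ip_dualEmb_left, dotProduct]
  simp only [ip_dualBasis_left, coe_dualEmb]
  rcases Int.units_eq_one_or ε with rfl | rfl <;> rcases Int.units_eq_one_or δ with rfl | rfl <;>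
    simp [dotProduct, Fin.sum_univ_three] <;> ring

lemma brkt_dualEmb_dualEmb (ε δ : ℤˣ) (v w : Fin 3 → ℝ) :
    brkt (dualEmb ε v) (dualEmb δ w) =
      if ε = δ then (-2 : ℝ) • ε • dualEmb ε (v ⨯₃ w) else 0 := by
  rcases Int.units_eq_one_or ε with rfl | rfl <;> rcases Int.units_eq_one_or δ with rfl | rfl <;>
    apply so_four_ext <;>
    simp [-cons_mul, brkt, coe_dualEmb, Matrix.mul_apply, Fin.sum_univ_four, cross_apply] <;> ring

lemma hodge_eq_smul_iff {ε : ℤˣ} {M : so 4} : hodge M = ε • M ↔ ∃ v, M = dualEmb ε v := by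
  constructor
  · intro h
    have entry (i j : Fin 4) : (hodge M).1 i j = ε • M.1 i j := by rw [h]; rfl
    have h03 := entry 0 3
    have h02 := entry 0 2
    have h01 := entry 0 1
    refine ⟨![M.1 0 1, M.1 0 2, M.1 0 3], ?_⟩
    rcases Int.units_eq_one_or ε with rfl | rfl <;>
      apply so_four_ext <;> simp [coe_dualEmb, hodge] at h01 h02 h03 ⊢ <;>
      linarith [so_skew' M 1 3]
  · rintro ⟨v, rfl⟩
    exact hodge_dualEmb ε v

lemma dualEmb_injective (ε : ℤˣ) : Function.Injective (dualEmb ε) := by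
  refine (injective_iff_map_eq_zero _).mpr fun v hv => ?_
  have h := ip_dualEmb_dualEmb ε ε v v
  rw [hv, if_pos rfl] at h
  exact dotProduct_self_eq_zero.mp (by simpa [ip] using h.symm)

lemma sum_pairs_four_smul {V : Type*} [AddCommGroup V] [Module ℝ V] (f : so 4 →ₗ[ℝ] ℝ)
    (g : so 4 →ₗ[ℝ] V) : ∑ p ∈ pairs 4, f (omegaB p) • g (omegaB p) =
      (1 / 2 : ℝ) • ∑ ε : ℤˣ, ∑ k, f (dualBasis ε k) • g (dualBasis ε k) := by
  have hpairs : pairs 4 = {(0, 1), (0, 2), (0, 3), (1, 2), (1, 3), (2, 3)} := by decide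
  have hswap : omegaB ((3 : Fin 4), (1 : Fin 4)) = -omegaB (1, 3) := wedgeVec_swap _ _
  simp [hpairs, UnitsInt.univ, Fin.sum_univ_three, dualBasis, hswap]
  module

lemma sharp_apply_dualBasis (A B : Module.End ℝ (so 4)) (X : so 4) :
    sharp A B X = (1 / 8 : ℝ) • ∑ ε : ℤˣ, ∑ k, ∑ δ : ℤˣ, ∑ l,
      ip (brkt (A (dualBasis ε k)) (B (dualBasis δ l))) X •
        brkt (dualBasis ε k) (dualBasis δ l) := by
  have hleft (Y Z : so 4) := sum_pairs_four_smul (ipL X ∘ₗ brktL.flip Y ∘ₗ A) (brktL.flip Z)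
  have hright (Y Z : so 4) := sum_pairs_four_smul (ipL X ∘ₗ brktL Y ∘ₗ B) (brktL Z)
  simp only [LinearMap.comp_apply, LinearMap.flip_apply, ipL_apply, brktL_apply, ip_comm X]
    at hleft hright
  rw [sharp_apply, Finset.sum_comm]
  simp only [hleft, ← Finset.smul_sum, Finset.sum_comm (s := pairs 4), hright, smul_smul]
  norm_num

lemma sharp_dualEmb {R : Module.End ℝ (so 4)} {A : ℤˣ → Matrix (Fin 3) (Fin 3) ℝ}
    (hA : ∀ ε k, R (dualBasis ε k) = dualEmb ε ((A ε).col k)) (ε : ℤˣ) (v : Fin 3 → ℝ) :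
    sharp R R (dualEmb ε v) = dualEmb ε ((2 : ℝ) • ((A ε).adjugate *ᵥ v)) := by
  have hne {γ δ : ℤˣ} (h : γ ≠ ε ∨ δ ≠ ε) (k l : Fin 3) :
      ip (brkt (R (dualBasis γ k)) (R (dualBasis δ l))) (dualEmb ε v) •
        brkt (dualBasis γ k) (dualBasis δ l) = 0 := by
    rw [hA, hA, brkt_dualEmb_dualEmb]
    obtain rfl | hγδ := eq_or_ne γ δ
    · rcases Int.units_eq_one_or γ with rfl | rfl <;>
        simp [ip_smul_left, ip_dualEmb_dualEmb, or_self_iff.mp h]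
    · rw [← dualEmb_single, ← dualEmb_single, brkt_dualEmb_dualEmb, if_neg hγδ, if_neg hγδ,
        smul_zero]
  have hself (k l : Fin 3) :
      ip (brkt (R (dualBasis ε k)) (R (dualBasis ε l))) (dualEmb ε v) •
        brkt (dualBasis ε k) (dualBasis ε l) = (8 : ℝ) •
          dualEmb ε ((((A ε).col k ⨯₃ (A ε).col l) ⬝ᵥ v) • (Pi.single k 1 ⨯₃ Pi.single l 1)) := by
    rw [hA, hA, ← dualEmb_single, ← dualEmb_single, brkt_dualEmb_dualEmb,
      brkt_dualEmb_dualEmb, map_smul]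
    rcases Int.units_eq_one_or ε with rfl | rfl <;>
    · simp [ip_smul_left, ip_dualEmb_dualEmb]
      module
  rw [sharp_apply_dualBasis, Fintype.sum_eq_single ε]
  · simp only [Fintype.sum_eq_single ε fun _ hδ => Finset.sum_eq_zero fun l _ => hne (.inr hδ) _ l]
    simp only [hself, ← sum_crossProduct_smul, map_sum, ← Finset.smul_sum, smul_smul]
    norm_num
  · exact fun γ hγ => Finset.sum_eq_zero fun k _ => Finset.sum_eq_zero fun δ _ =>
      Finset.sum_eq_zero fun l _ => hne (.inl hγ) k l

end HodgeHalves

section Blocks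

lemma ip_map_dualBasis (R : Module.End ℝ (so 4)) (ε δ : ℤˣ) (i j : Fin 3) :
    ip (R (dualBasis ε i)) (dualBasis δ j) =
      curv R 0 i.succ 0 j.succ + ε • curv R (i + 1).succ (i + 2).succ 0 j.succ +
        δ • curv R 0 i.succ (j + 1).succ (j + 2).succ +
        (ε * δ) • curv R (i + 1).succ (i + 2).succ (j + 1).succ (j + 2).succ := by
  rcases Int.units_eq_one_or ε with rfl | rfl <;> rcases Int.units_eq_one_or δ with rfl | rfl <;>
    simp [dualBasis, omegaB, curv, ip_add_left, ip_add_right, ip_neg_left, ip_neg_right] <;> ring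

lemma ip_map_dualBasis_of_ne {R : Module.End ℝ (so 4)} (hS : IsSelfAdjointCO R)
    (hE : IsEinstein R) {ε δ : ℤˣ} (h : ε ≠ δ) (i j : Fin 3) :
    ip (R (dualBasis ε i)) (dualBasis δ j) = 0 := by
  obtain ⟨c, hc⟩ := hE
  have hcomm := curv_comm hS
  have hRic (k l : Fin 4) : ∑ m, curv R k m l m = c * if k = l then 1 else 0 := by
    rw [← RicM_apply, hc, Matrix.smul_apply, one_apply, smul_eq_mul]
  simp only [Fin.sum_univ_four] at hRic
  obtain rfl := Int.units_ne_iff_eq_neg.mp h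
  rw [ip_map_dualBasis]
  rcases Int.units_eq_one_or δ with rfl | rfl <;> fin_cases i <;> fin_cases j <;>
    simp [-neg_add_rev] <;>
    grind [curv_swap_left, curv_swap_right, curv_self_left, curv_self_right]

lemma sum_ip_map_dualBasis {R : Module.End ℝ (so 4)} (hR : IsACO R) (ε : ℤˣ) :
    ∑ i, ip (R (dualBasis ε i)) (dualBasis ε i) = scal R / 2 := by
  have hBianchi : curv R 0 1 2 3 + curv R 1 2 0 3 + curv R 2 0 1 3 = 0 := hR.2 ..
  have hcomm := curv_comm hR.1
  simp only [ip_map_dualBasis, scal, Matrix.trace, diag_apply, RicM_apply]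
  rcases Int.units_eq_one_or ε with rfl | rfl <;>
  · simp [Fin.sum_univ_four, Fin.sum_univ_three, curv_self_left]
    grind [curv_swap_left, curv_swap_right]

/-- The matrix, in the basis `dualBasis ε`, of the compression of `R` to the half `⋀^ε`; division by
`2` accounts for the squared length of the basis vectors. -/
def dualBlock (R : Module.End ℝ (so 4)) (ε : ℤˣ) : Matrix (Fin 3) (Fin 3) ℝ :=
  of fun i j => ip (R (dualBasis ε j)) (dualBasis ε i) / 2

lemma isHermitian_dualBlock {R : Module.End ℝ (so 4)} (hS : IsSelfAdjointCO R) (ε : ℤˣ) :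
    (dualBlock R ε).IsHermitian := by
  ext i j
  simp only [dualBlock, conjTranspose_apply, of_apply, star_trivial]
  rw [hS, ip_comm]

lemma trace_dualBlock {R : Module.End ℝ (so 4)} (hR : IsACO R) (ε : ℤˣ) :
    (dualBlock R ε).trace = scal R / 4 := by
  simp only [dualBlock, Matrix.trace, diag_apply, of_apply, ← Finset.sum_div,
    sum_ip_map_dualBasis hR]
  ring

lemma map_dualBasis {R : Module.End ℝ (so 4)} (hS : IsSelfAdjointCO R) (hE : IsEinstein R)
    (ε : ℤˣ) (j : Fin 3) : R (dualBasis ε j) = dualEmb ε ((dualBlock R ε).col j) := by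
  rw [eq_sum_dualEmb (R (dualBasis ε j)), Fintype.sum_eq_single ε]
  · simp only [ip_comm (dualBasis ε _)]
    rfl
  · intro δ hδ
    simp only [ip_comm (dualBasis δ _), ip_map_dualBasis_of_ne hS hE hδ.symm, zero_div]
    exact map_zero _

lemma map_dualEmb {R : Module.End ℝ (so 4)} (hS : IsSelfAdjointCO R) (hE : IsEinstein R)
    (ε : ℤˣ) (v : Fin 3 → ℝ) : R (dualEmb ε v) = dualEmb ε (dualBlock R ε *ᵥ v) := by
  have h : R ∘ₗ dualEmb ε = dualEmb ε ∘ₗ (dualBlock R ε).mulVecLin := by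
    refine LinearMap.pi_ext' fun j => LinearMap.ext_ring ?_
    simp [dualEmb_single, map_dualBasis hS hE]
  exact LinearMap.congr_fun h v

lemma hodge_map_of_hodge_eq_smul {R : Module.End ℝ (so 4)} (hS : IsSelfAdjointCO R)
    (hE : IsEinstein R) {ε : ℤˣ} {M : so 4} (hM : hodge M = ε • M) :
    hodge (R M) = ε • R M := by
  obtain ⟨v, rfl⟩ := hodge_eq_smul_iff.mp hM
  rw [map_dualEmb hS hE, hodge_dualEmb]

lemma dualBlock_quadratic {R : Module.End ℝ (so 4)} (hS : IsSelfAdjointCO R) (hE : IsEinstein R)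
    {c : ℝ} (hQ : Qop R = c • R) (ε : ℤˣ) :
    dualBlock R ε * dualBlock R ε + (2 : ℝ) • (dualBlock R ε).adjugate = c • dualBlock R ε := by
  refine ext_iff_mulVec.mpr fun v => dualEmb_injective ε ?_
  have h := LinearMap.congr_fun hQ (dualEmb ε v)
  simp only [Qop, LinearMap.add_apply, Module.End.mul_apply, LinearMap.smul_apply,
    map_dualEmb hS hE, sharp_dualEmb (map_dualBasis hS hE), ← map_smul, ← map_add] at h
  simpa only [add_mulVec, smul_mulVec, mulVec_mulVec] using h

lemma eigenvalues_dualBlock {R : Module.End ℝ (so 4)} (hR : IsACO R) (hE : IsEinstein R)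
    (hQ : Qop R = (scal R / 4) • R) (ε : ℤˣ) :
    let l := (isHermitian_dualBlock hR.1 ε).eigenvalues
    ({l 0, l 1, l 2} : Multiset ℝ) = {scal R / 12, scal R / 12, scal R / 12} ∨
      ({l 0, l 1, l 2} : Multiset ℝ) = {0, 0, scal R / 4} := by
  have h := dualBlock_quadratic hR.1 hE hQ ε
  rw [← trace_dualBlock hR ε] at h
  convert eigenvalues_eq_of_quadratic (isHermitian_dualBlock hR.1 ε) h using 3
  all_goals
    rw [trace_dualBlock hR]
    ring_nf

end Blocks

/-- An orthonormal basis of the half `⋀^ε` which diagonalizes the block `dualBlock R ε`. -/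
def dualEigenvector {R : Module.End ℝ (so 4)} (hS : IsSelfAdjointCO R) (ε : ℤˣ) (i : Fin 3) :
    so 4 :=
  (√2)⁻¹ • dualEmb ε ((isHermitian_dualBlock hS ε).eigenvectorBasis i).ofLp

section Eigenvectors

variable {R : Module.End ℝ (so 4)} (hS : IsSelfAdjointCO R)

lemma ip_dualEigenvector (ε δ : ℤˣ) (i j : Fin 3) :
    ip (dualEigenvector hS ε i) (dualEigenvector hS δ j) = if ε = δ ∧ i = j then 1 else 0 := by
  rw [dualEigenvector, dualEigenvector, ip_smul_left, ip_smul_right, ip_dualEmb_dualEmb, ite_and]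
  obtain rfl | hne := eq_or_ne ε δ
  · have hsqrt : (√2)⁻¹ * (√2)⁻¹ * 2 = (1 : ℝ) := by
      rw [← mul_inv, Real.mul_self_sqrt zero_le_two, inv_mul_cancel₀ two_ne_zero]
    have h := orthonormal_iff_ite.mp
      (isHermitian_dualBlock hS ε).eigenvectorBasis.orthonormal i j
    rw [EuclideanSpace.inner_eq_star_dotProduct, star_trivial, dotProduct_comm] at h
    rw [if_pos rfl, if_pos rfl, h]
    linear_combination hsqrt * if i = j then (1 : ℝ) else 0
  · rw [if_neg hne, if_neg hne, mul_zero, mul_zero]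

lemma hodge_dualEigenvector (ε : ℤˣ) (i : Fin 3) :
    hodge (dualEigenvector hS ε i) = ε • dualEigenvector hS ε i := by
  rw [dualEigenvector, ← map_smul, hodge_dualEmb]

lemma map_dualEigenvector (hE : IsEinstein R) (ε : ℤˣ) (i : Fin 3) :
    R (dualEigenvector hS ε i) =
      (isHermitian_dualBlock hS ε).eigenvalues i • dualEigenvector hS ε i := by
  rw [dualEigenvector, map_smul, map_dualEmb hS hE,
    (isHermitian_dualBlock hS ε).mulVec_eigenvectorBasis, map_smul, smul_comm]

end Eigenvectors

/-- Let `R ∈ S²_B(⋀²ℝ⁴)` be an Einstein algebraic curvature operator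
with `s(R) = 1` and `Q(R) = ‖Ric(R)‖² R`.  Then `R` preserves the splitting
`⋀²ℝ⁴ = ⋀⁺ ⊕ ⋀⁻` into the `±1` eigenspaces of the Hodge star, and there is an
orthonormal eigenbasis `ξ` of `R` adapted to the splitting whose pair of eigenvalue
multisets on `⋀⁺` and `⋀⁻` is, up to interchanging the factors, one of:
`({1/12,1/12,1/12},{1/12,1/12,1/12})` (round `S⁴`), `({0,0,1/4},{0,0,1/4})`
(`S² × S²`), or `({0,0,1/4},{1/12,1/12,1/12})` (Fubini–Study `ℂP²`); i.e. up to `O(4)`,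
`R` is the curvature operator of a symmetric space with unit scalar curvature. -/
theorem stmt1 (R : Module.End ℝ (so 4)) (hACO : IsACO R) (hEin : IsEinstein R)
    (hscal : scal R = 1) (hQ : Qop R = ricNormSq R • R) :
    (∀ M : so 4, hodge M = M → hodge (R M) = R M) ∧
    (∀ M : so 4, hodge M = -M → hodge (R M) = -(R M)) ∧
    ∃ (ξ : Fin 6 → so 4) (μ : Fin 6 → ℝ),
      (∀ i j : Fin 6, ip (ξ i) (ξ j) = if i = j then (1 : ℝ) else 0) ∧
      (∀ i : Fin 6, (i : ℕ) < 3 → hodge (ξ i) = ξ i) ∧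
      (∀ i : Fin 6, 3 ≤ (i : ℕ) → hodge (ξ i) = -(ξ i)) ∧
      (∀ i : Fin 6, R (ξ i) = μ i • ξ i) ∧
      ((({μ 0, μ 1, μ 2} : Multiset ℝ) = {1/12, 1/12, 1/12} ∧
          ({μ 3, μ 4, μ 5} : Multiset ℝ) = {1/12, 1/12, 1/12}) ∨
       (({μ 0, μ 1, μ 2} : Multiset ℝ) = {0, 0, 1/4} ∧
          ({μ 3, μ 4, μ 5} : Multiset ℝ) = {0, 0, 1/4}) ∨
       (({μ 0, μ 1, μ 2} : Multiset ℝ) = {0, 0, 1/4} ∧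
          ({μ 3, μ 4, μ 5} : Multiset ℝ) = {1/12, 1/12, 1/12}) ∨
       (({μ 0, μ 1, μ 2} : Multiset ℝ) = {1/12, 1/12, 1/12} ∧
          ({μ 3, μ 4, μ 5} : Multiset ℝ) = {0, 0, 1/4})) := by
  have hS := hACO.1
  have hric : ricNormSq R = scal R / 4 := by
    rw [ricNormSq_of_isEinstein hEin, hscal]
    norm_num
  have hpres {ε : ℤˣ} {M : so 4} (hM : hodge M = ε • M) : hodge (R M) = ε • R M :=
    hodge_map_of_hodge_eq_smul hS hEin hM
  have hl (ε : ℤˣ) := eigenvalues_dualBlock hACO hEin (hric ▸ hQ) ε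
  rw [hscal] at hl
  set l := fun ε => (isHermitian_dualBlock hS ε).eigenvalues
  set e := dualEigenvector hS
  refine ⟨fun M hM => by simpa using hpres (ε := 1) (by simpa using hM),
    fun M hM => by simpa using hpres (ε := -1) (by simpa using hM),
    ![e 1 0, e 1 1, e 1 2, e (-1) 0, e (-1) 1, e (-1) 2],
    ![l 1 0, l 1 1, l 1 2, l (-1) 0, l (-1) 1, l (-1) 2], ?_, ?_, ?_, ?_, ?_⟩
  · intro i j
    fin_cases i <;> fin_cases j <;> simp [e, ip_dualEigenvector]
  · simp [Fin.forall_fin_succ, e, hodge_dualEigenvector]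
  · simp [Fin.forall_fin_succ, e, hodge_dualEigenvector]
  · simp [Fin.forall_fin_succ, e, l, map_dualEigenvector hS hEin]
  · rcases hl 1 with h1 | h1 <;> rcases hl (-1) with h2 | h2
    · exact .inl ⟨h1, h2⟩
    · exact .inr (.inr (.inr ⟨h1, h2⟩))
    · exact .inr (.inr (.inl ⟨h1, h2⟩))
    · exact .inr (.inl ⟨h1, h2⟩)

end
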